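/- Let U ⊆ ℂ be an open set, let A, B, C, D be functions holomorphic on U, and let f : U → ℂ be a C^∞-smooth function satisfying f_z = A·f³ + B·f² + C·f + D at every point of U. Then f is real-analytic on U. -/

import Mathlib

open Complex

/-- The Wirtinger derivative `g_z = (1/2)(∂g/∂x - i ∂g/∂y)` of a function `g : ℂ → ℂ`,
computed from the real Fréchet derivative. -/
noncomputable def wirtingerZ (g : ℂ → ℂ) : ℂ → ℂ :=
  fun z => (1 / 2 : ℂ) * (fderiv ℝ g z 1 - Complex.I * fderiv ℝ g z Complex.I)

/-- The conjugate Wirtinger derivative `g_z̄ = (1/2)(∂g/∂x + i ∂g/∂y)`. -/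
noncomputable def wirtingerZbar (g : ℂ → ℂ) : ℂ → ℂ :=
  fun z => (1 / 2 : ℂ) * (fderiv ℝ g z 1 + Complex.I * fderiv ℝ g z Complex.I)

/-!
The equation `f_z = P (z, f)` says that `g z = (z, f z)` satisfies `g_z = V ∘ g` for the
holomorphic vector field `V = (1, P)`. The flow `φ` of `V` in complex time is holomorphic: it is
obtained from the implicit function theorem applied to the Picard integral equation on the space of
paths `[0, 1] → E`. Let `Φ (t, ·)` be the inverse of `φ (t, ·)`. Since `Φ` is constant along the
integral curves `t ↦ (t, φ (t, x))`, the chain rule gives `G_z = 0` for `G z = Φ (z - z₀, g z)`.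
Hence `G` is antiholomorphic, in particular real-analytic, and so is `g z = φ (z - z₀, G z)`.
-/

open Filter Set Topology
open scoped ComplexConjugate ContDiff

section Superposition

theorem eval_update {ι X Y : Type*} [DecidableEq ι] [TopologicalSpace X] [TopologicalSpace Y]
    (u : ι → C(X, Y)) (i : ι) (v : C(X, Y)) (s : X) :
    (fun j ↦ Function.update u i v j s) = Function.update (fun j ↦ u j s) i (v s) :=
  funext fun j ↦ Function.apply_update (fun _ (w : C(X, Y)) ↦ w s) u i v j

theorem edist_apply_le_edist {X Y : Type*} [TopologicalSpace X] [CompactSpace X]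
    [PseudoMetricSpace Y] (u v : C(X, Y)) (s : X) : edist (u s) (v s) ≤ edist u v := by
  rw [ContinuousMap.edist_eq_iSup]
  exact le_iSup (fun s ↦ edist (u s) (v s)) s

variable {𝕜 K E F : Type*} [NontriviallyNormedField 𝕜] [TopologicalSpace K] [CompactSpace K]
  [NormedAddCommGroup E] [NormedSpace 𝕜 E] [NormedAddCommGroup F] [NormedSpace 𝕜 F]

/-- A continuous multilinear map applied pointwise to tuples of continuous functions on a compact
space. -/
noncomputable def pointwiseMultilinear {ι : Type*} [Fintype ι] (K : Type*) [TopologicalSpace K]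
    [CompactSpace K] (m : ContinuousMultilinearMap 𝕜 (fun _ : ι ↦ E) F) :
    ContinuousMultilinearMap 𝕜 (fun _ : ι ↦ C(K, E)) C(K, F) :=
  MultilinearMap.mkContinuous
    { toFun u := ⟨fun s ↦ m fun i ↦ u i s, by fun_prop⟩
      map_update_add' u i v w := by
        ext s
        simp [eval_update]
      map_update_smul' u i c v := by
        ext s
        simp [eval_update] }
    ‖m‖ fun u ↦ by
      refine (ContinuousMap.norm_le _ (by positivity)).2 fun s ↦ (m.le_opNorm _).trans ?_
      gcongr with i
      exact (u i).norm_coe_le_norm s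

theorem norm_pointwiseMultilinear_le {ι : Type*} [Fintype ι]
    (m : ContinuousMultilinearMap 𝕜 (fun _ : ι ↦ E) F) : ‖pointwiseMultilinear K m‖ ≤ ‖m‖ :=
  MultilinearMap.mkContinuous_norm_le _ (norm_nonneg m) _

/-- The power series of the superposition operator `u ↦ f ∘ u` on `C(K, E)` obtained from a power
series `p` of `f : E → F`. -/
noncomputable def pointwiseSeries (K : Type*) [TopologicalSpace K] [CompactSpace K]
    (p : FormalMultilinearSeries 𝕜 E F) : FormalMultilinearSeries 𝕜 C(K, E) C(K, F) :=
  fun n ↦ pointwiseMultilinear K (p n)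

theorem radius_le_radius_pointwiseSeries (p : FormalMultilinearSeries 𝕜 E F) :
    p.radius ≤ (pointwiseSeries K p).radius :=
  FormalMultilinearSeries.radius_le_of_le fun n ↦ norm_pointwiseMultilinear_le (p n)

theorem exists_analyticAt_superposition [CompleteSpace F] {f : E → F} {x₀ : E}
    (hf : AnalyticAt 𝕜 f x₀) :
    ∃ N : C(K, E) → C(K, F), AnalyticAt 𝕜 N (.const K x₀) ∧
      ∀ᶠ u in 𝓝 (ContinuousMap.const K x₀), ∀ s, N u s = f (u s) := by
  obtain ⟨p, r, hp⟩ := hf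
  have hr : r ≤ (pointwiseSeries K p).radius :=
    hp.r_le.trans (radius_le_radius_pointwiseSeries p)
  have hq : HasFPowerSeriesOnBall (fun u ↦ (pointwiseSeries K p).sum (u - .const K x₀))
      (pointwiseSeries K p) (.const K x₀) r := by
    simpa using (((pointwiseSeries K p).hasFPowerSeriesOnBall (hp.r_pos.trans_le hr)).mono
      hp.r_pos hr).comp_sub (.const K x₀)
  refine ⟨_, hq.analyticAt, ?_⟩
  filter_upwards [Metric.eball_mem_nhds _ hp.r_pos] with u hu s
  have hus : u s ∈ Metric.eball x₀ r := (edist_apply_le_edist u (.const K x₀) s).trans_lt hu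
  have hNsum := (hq.hasSum_sub hu).map (ContinuousMap.evalCLM 𝕜 s)
    (ContinuousMap.evalCLM 𝕜 s).continuous
  exact hNsum.unique (hp.hasSum_sub hus)

end Superposition

section ImplicitFunction

variable {𝕜 X Y : Type*} [RCLike 𝕜] [NormedAddCommGroup X] [NormedSpace 𝕜 X] [CompleteSpace X]
  [NormedAddCommGroup Y] [NormedSpace 𝕜 Y] [CompleteSpace Y]

theorem exists_analyticAt_implicitFunction_of_eq_sub {H : X × Y → Y} {x₀ : X} {y₀ : Y}
    (hH : AnalyticAt 𝕜 H (x₀, y₀)) (hH₀ : ∀ᶠ y in 𝓝 y₀, H (x₀, y) = y - y₀) :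
    ∃ h : X → Y, AnalyticAt 𝕜 h x₀ ∧ h x₀ = y₀ ∧
      (∀ᶠ x in 𝓝 x₀, H (x, h x) = 0) ∧ ∀ᶠ v in 𝓝 (x₀, y₀), H v = 0 → h v.1 = v.2 := by
  have hH_zero : H (x₀, y₀) = 0 := by simpa using hH₀.self_of_nhds
  have hpartial : fderiv 𝕜 H (x₀, y₀) ∘L .inr 𝕜 X Y = .id 𝕜 Y :=
    (hH.differentiableAt.hasFDerivAt.comp y₀ (hasFDerivAt_prodMk_right x₀ y₀)).unique
      (((hasFDerivAt_id y₀).sub_const y₀).congr_of_eventuallyEq hH₀)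
  have hinv : (fderiv 𝕜 H (x₀, y₀) ∘L .inr 𝕜 X Y).IsInvertible := by
    rw [hpartial]
    exact ContinuousLinearMap.isInvertible_equiv (f := .refl 𝕜 Y)
  have hH' : ContDiffAt 𝕜 ω H (x₀, y₀) := hH.contDiffAt
  have hω : (ω : ℕ∞ω) ≠ 0 := by simp
  refine ⟨hH'.implicitFunction hω hinv, (hH'.contDiffAt_implicitFunction hω hinv).analyticAt,
    hH'.implicitFunction_apply_self hω hinv, ?_, ?_⟩
  · simpa only [hH_zero] using hH'.eventually_apply_implicitFunction hω hinv
  · filter_upwards [hH'.eventually_apply_eq_iff_implicitFunction hω hinv] with v hv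
    simpa only [hH_zero] using hv.1

end ImplicitFunction

section Flow

variable {𝕜 E : Type*} [RCLike 𝕜] [NormedAddCommGroup E] [NormedSpace ℝ E] [NormedSpace 𝕜 E]
  {V : E → E} {x₀ : E}

/-- `u : [0, 1] → E` solves the integral form of the initial value problem `u' = t • V u`,
`u 0 = x`. A solution is `s ↦ φ (s • t) x`, where `φ` is the flow of `V`, so that complex times `t`
are reached along a real path. -/
def SolvesRescaledODE (V : E → E) (t : 𝕜) (x : E) (u : C(unitInterval, E)) : Prop :=
  ∀ s : unitInterval, u s = x + t • ∫ σ in (0 : ℝ)..s, V (u.IccExtend zero_le_one σ)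

/-- The dilation `s ↦ r * s` of the unit interval, depending continuously on `r`. -/
def unitDilation : C(unitInterval, C(unitInterval, unitInterval)) :=
  ContinuousMap.curry ⟨fun p ↦ p.1 * p.2, by fun_prop⟩

/-- Near `(0, x₀)`, the paths `u (t, x)` depend analytically on `(t, x)` and are the only solutions
of the rescaled initial value problem for `V` that stay close to the constant path `x₀`. -/
structure IsLocalSolutionFamily (V : E → E) (x₀ : E) (u : 𝕜 × E → C(unitInterval, E)) : Prop where
  analyticAt : AnalyticAt 𝕜 u (0, x₀)
  apply_base : u (0, x₀) = .const unitInterval x₀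
  eventually_solves : ∀ᶠ p in 𝓝 (0, x₀), SolvesRescaledODE V p.1 p.2 (u p)
  eventually_unique : ∀ᶠ v in 𝓝 ((0, x₀), ContinuousMap.const unitInterval x₀),
    SolvesRescaledODE V v.1.1 v.1.2 v.2 → u v.1 = v.2

namespace IsLocalSolutionFamily

variable {u : 𝕜 × E → C(unitInterval, E)}

theorem eventually_forall_analyticAt [CompleteSpace E] (h : IsLocalSolutionFamily V x₀ u)
    (hV : AnalyticAt 𝕜 V x₀) :
    ∀ᶠ p in 𝓝 (0, x₀), ∀ s, AnalyticAt 𝕜 V (u p s) := by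
  suffices ∀ᶠ p in 𝓝 (0, x₀), ∀ s ∈ (univ : Set unitInterval), AnalyticAt 𝕜 V (u p s) by
    simpa using this
  refine isCompact_univ.eventually_forall_of_forall_eventually fun s _ ↦ ?_
  have hcont : ContinuousAt (fun q : (𝕜 × E) × unitInterval ↦ u q.1 q.2) ((0, x₀), s) :=
    (h.analyticAt.continuousAt.comp_of_eq continuousAt_fst rfl).eval continuousAt_snd
  refine hcont.eventually ?_
  simpa [h.apply_base] using hV.eventually_analyticAt

theorem analyticAt_endpoint (h : IsLocalSolutionFamily V x₀ u) :
    AnalyticAt 𝕜 (fun p ↦ u p 1) (0, x₀) :=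
  ((ContinuousMap.evalCLM 𝕜 (1 : unitInterval)).analyticAt (u (0, x₀))).fun_comp h.analyticAt

theorem eventually_endpoint_zero (h : IsLocalSolutionFamily V x₀ u) :
    ∀ᶠ x in 𝓝 x₀, u (0, x) 1 = x := by
  filter_upwards [(Continuous.prodMk_right (0 : 𝕜)).continuousAt.eventually h.eventually_solves]
    with x hx
  simpa using hx 1

end IsLocalSolutionFamily

variable [IsScalarTower ℝ 𝕜 E]

/-- The operator sending a path `u : [0, 1] → E` to its primitive `s ↦ ∫ σ in 0..s, u σ`. -/
noncomputable def volterra (𝕜 : Type*) {E : Type*} [RCLike 𝕜] [NormedAddCommGroup E]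
    [NormedSpace ℝ E] [NormedSpace 𝕜 E] [IsScalarTower ℝ 𝕜 E] :
    C(unitInterval, E) →L[𝕜] C(unitInterval, E) :=
  LinearMap.mkContinuous
    { toFun u := ⟨fun s ↦ ∫ σ in (0 : ℝ)..s, u.IccExtend zero_le_one σ,
        (intervalIntegral.continuous_primitive
          (fun a b ↦ (map_continuous _).intervalIntegrable a b) 0).comp continuous_subtype_val⟩
      map_add' u v := ContinuousMap.ext fun _ ↦ intervalIntegral.integral_add
        ((u.IccExtend zero_le_one).continuous.intervalIntegrable _ _)
        ((v.IccExtend zero_le_one).continuous.intervalIntegrable _ _)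
      map_smul' c u := ContinuousMap.ext fun _ ↦ intervalIntegral.integral_smul c _ }
    1 fun u ↦ by
      rw [one_mul]
      refine (ContinuousMap.norm_le _ (norm_nonneg u)).2 fun s ↦ ?_
      calc ‖∫ σ in (0 : ℝ)..s, u.IccExtend zero_le_one σ‖ ≤ ‖u‖ * |(s : ℝ) - 0| :=
            intervalIntegral.norm_integral_le_of_norm_le_const fun σ _ ↦ u.norm_coe_le_norm _
        _ ≤ ‖u‖ := mul_le_of_le_one_right (norm_nonneg u)
            (by simpa [abs_of_nonneg s.2.1] using s.2.2)

theorem volterra_apply (u : C(unitInterval, E)) (s : unitInterval) :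
    volterra 𝕜 u s = ∫ σ in (0 : ℝ)..s, u.IccExtend zero_le_one σ :=
  rfl

/-- The map whose zeros `((t, x), u)` are the solutions `u` of the rescaled initial value problem
when `N` is the superposition operator `u ↦ V ∘ u`. -/
noncomputable def picardDefect (N : C(unitInterval, E) → C(unitInterval, E))
    (v : (𝕜 × E) × C(unitInterval, E)) : C(unitInterval, E) :=
  v.2 - .const unitInterval v.1.2 - v.1.1 • volterra 𝕜 (N v.2)

theorem analyticAt_picardDefect {N : C(unitInterval, E) → C(unitInterval, E)}
    {v : (𝕜 × E) × C(unitInterval, E)} (hN : AnalyticAt 𝕜 N v.2) :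
    AnalyticAt 𝕜 (picardDefect N) v := by
  have hconst : AnalyticAt 𝕜 (fun v : (𝕜 × E) × C(unitInterval, E) ↦
      ContinuousMap.const unitInterval v.1.2) v :=
    (ContinuousLinearMap.const 𝕜 unitInterval ∘L .snd 𝕜 𝕜 E ∘L .fst 𝕜 _ _).analyticAt v
  have hvolterra : AnalyticAt 𝕜 (fun w ↦ volterra 𝕜 (N w)) v.2 :=
    ((volterra 𝕜).analyticAt (N v.2)).fun_comp hN
  exact (analyticAt_snd.sub hconst).sub
    ((analyticAt_fst.fun_comp analyticAt_fst).smul (hvolterra.fun_comp analyticAt_snd))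

theorem picardDefect_eq_zero_iff {N : C(unitInterval, E) → C(unitInterval, E)}
    {v : (𝕜 × E) × C(unitInterval, E)} (hN : ∀ s, N v.2 s = V (v.2 s)) :
    picardDefect N v = 0 ↔ SolvesRescaledODE V v.1.1 v.1.2 v.2 := by
  have hN_extend (σ : ℝ) : (N v.2).IccExtend zero_le_one σ = V (v.2.IccExtend zero_le_one σ) :=
    hN _
  rw [ContinuousMap.ext_iff]
  refine forall_congr' fun s ↦ ?_
  have hdefect : picardDefect N v s = v.2 s - v.1.2 - v.1.1 • volterra 𝕜 (N v.2) s := rfl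
  rw [hdefect, ContinuousMap.zero_apply, sub_sub, sub_eq_zero, volterra_apply]
  simp only [hN_extend]

theorem exists_isLocalSolutionFamily [CompleteSpace E] (hV : AnalyticAt 𝕜 V x₀) :
    ∃ u : 𝕜 × E → C(unitInterval, E), IsLocalSolutionFamily V x₀ u := by
  obtain ⟨N, hN, hNV⟩ := exists_analyticAt_superposition (K := unitInterval) hV
  have hsolves_iff : ∀ᶠ v in 𝓝 (((0 : 𝕜), x₀), ContinuousMap.const unitInterval x₀),
      picardDefect N v = 0 ↔ SolvesRescaledODE V v.1.1 v.1.2 v.2 :=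
    (hNV.prod_inr_nhds ((0 : 𝕜), x₀)).mono fun _ ↦ picardDefect_eq_zero_iff
  obtain ⟨u, hu, hu₀, hzero, hunique⟩ := exists_analyticAt_implicitFunction_of_eq_sub
    (analyticAt_picardDefect (v := ((0, x₀), .const unitInterval x₀)) hN)
    (Eventually.of_forall fun w ↦ by simp [picardDefect])
  have hgraph : Tendsto (fun p ↦ (p, u p)) (𝓝 (0, x₀)) (𝓝 ((0, x₀), .const unitInterval x₀)) :=
    hu₀ ▸ tendsto_id.prodMk_nhds hu.continuousAt
  refine ⟨u, hu, hu₀, ?_, ?_⟩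
  · filter_upwards [hzero, hgraph.eventually hsolves_iff] with p hp hiff using hiff.1 hp
  · filter_upwards [hunique, hsolves_iff] with v hv hiff hsolves using hv (hiff.2 hsolves)

namespace SolvesRescaledODE

variable {t : 𝕜} {x : E} {u : C(unitInterval, E)}

theorem comp_unitDilation (hu : SolvesRescaledODE V t x u) (r : unitInterval) :
    SolvesRescaledODE V ((r : ℝ) • t) x (u.comp (unitDilation r)) := by
  intro s
  have extend_dilation : ∀ σ ∈ uIcc (0 : ℝ) s,
      (u.comp (unitDilation r)).IccExtend zero_le_one σ = u.IccExtend zero_le_one (r * σ) := by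
    intro σ hσ
    rw [uIcc_of_le s.2.1] at hσ
    have hσ' : σ ∈ Icc (0 : ℝ) 1 := ⟨hσ.1, hσ.2.trans s.2.2⟩
    simp only [ContinuousMap.coe_IccExtend, IccExtend_of_mem _ _ hσ',
      IccExtend_of_mem _ _ (unitInterval.mul_mem r.2 hσ')]
    rfl
  calc u (r * s) = x + t • ∫ σ in (0 : ℝ)..(r * s), V (u.IccExtend zero_le_one σ) := hu (r * s)
    _ = x + ((r : ℝ) • t) • ∫ σ in (0 : ℝ)..s, V (u.IccExtend zero_le_one (r * σ)) := by
      have := intervalIntegral.smul_integral_comp_mul_left (a := 0) (b := s)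
        (fun σ ↦ V (u.IccExtend zero_le_one σ)) r
      rw [mul_zero] at this
      rw [← this, smul_comm, smul_assoc]
    _ = x + ((r : ℝ) • t) •
        ∫ σ in (0 : ℝ)..s, V ((u.comp (unitDilation r)).IccExtend zero_le_one σ) := by
      congr 2
      exact intervalIntegral.integral_congr fun σ hσ ↦ by simp only [extend_dilation σ hσ]

theorem hasDerivWithinAt_one [CompleteSpace E] (hu : SolvesRescaledODE V t x u)
    (hV : ∀ s, ContinuousAt V (u s)) :
    HasDerivWithinAt (u.IccExtend zero_le_one) (t • V (u 1)) (Icc 0 1) (1 : ℝ) := by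
  have hcont : Continuous fun σ : ℝ ↦ V (u.IccExtend zero_le_one σ) :=
    continuous_iff_continuousAt.2 fun σ ↦
      ContinuousAt.comp (hV _) (u.IccExtend zero_le_one).continuous.continuousAt
  have hderiv : HasDerivAt (fun s : ℝ ↦ x + t • ∫ σ in (0 : ℝ)..s, V (u.IccExtend zero_le_one σ))
      (t • V (u 1)) 1 := by
    have := ((hcont.integral_hasStrictDerivAt 0 1).hasDerivAt.const_smul t).const_add x
    simpa [ContinuousMap.coe_IccExtend] using this
  refine hderiv.hasDerivWithinAt.congr_of_mem (fun s hs ↦ ?_) (right_mem_Icc.2 zero_le_one)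
  rw [ContinuousMap.coe_IccExtend, IccExtend_of_mem _ _ hs, hu ⟨s, hs⟩]
  rfl

end SolvesRescaledODE

namespace IsLocalSolutionFamily

variable {u : 𝕜 × E → C(unitInterval, E)}

theorem eventually_apply_eq_rescaled (h : IsLocalSolutionFamily V x₀ u) :
    ∀ᶠ p in 𝓝 (0, x₀), ∀ r : unitInterval, u p r = u ((r : ℝ) • p.1, p.2) 1 := by
  have hnear : ∀ᶠ p in 𝓝 (0, x₀), ∀ r ∈ (univ : Set unitInterval),
      SolvesRescaledODE V ((r : ℝ) • p.1) p.2 ((u p).comp (unitDilation r)) →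
        u ((r : ℝ) • p.1, p.2) = (u p).comp (unitDilation r) := by
    refine isCompact_univ.eventually_forall_of_forall_eventually fun r _ ↦ ?_
    have hcont : ContinuousAt (fun q : (𝕜 × E) × unitInterval ↦
        (((q.2 : ℝ) • q.1.1, q.1.2), (u q.1).comp (unitDilation q.2))) ((0, x₀), r) :=
      ContinuousAt.prodMk (by fun_prop) (ContinuousAt.compCM
        (h.analyticAt.continuousAt.comp_of_eq continuousAt_fst rfl) (by fun_prop))
    refine hcont.eventually
      (p := fun v ↦ SolvesRescaledODE V v.1.1 v.1.2 v.2 → u v.1 = v.2) ?_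
    simpa [h.apply_base] using h.eventually_unique
  filter_upwards [h.eventually_solves, hnear] with p hsolves hp r
  rw [hp r (mem_univ r) (hsolves.comp_unitDilation r)]
  exact congrArg (u p) (mul_one r).symm

variable [CompleteSpace E]

theorem eventually_smul_fderiv_endpoint (h : IsLocalSolutionFamily V x₀ u)
    (hV : AnalyticAt 𝕜 V x₀) :
    ∀ᶠ p in 𝓝 (0, x₀), p.1 • fderiv 𝕜 (fun p ↦ u p 1) p (1, 0) = p.1 • V (u p 1) := by
  filter_upwards [h.eventually_solves, h.eventually_apply_eq_rescaled,
    h.eventually_forall_analyticAt hV, h.analyticAt_endpoint.eventually_analyticAt]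
    with ⟨t, x⟩ hsolves hrescaled hVan hend
  -- Both derivatives below are those of `r ↦ u (t, x) r = u (r • t, x) 1` at `r = 1`.
  have hpath : HasDerivWithinAt (fun r : ℝ ↦ u (r • t, x) 1) (t • V (u (t, x) 1)) (Icc 0 1) 1 := by
    refine (hsolves.hasDerivWithinAt_one fun s ↦ (hVan s).continuousAt).congr_of_mem
      (fun r hr ↦ ?_) (right_mem_Icc.2 zero_le_one)
    rw [ContinuousMap.coe_IccExtend, IccExtend_of_mem _ _ hr, hrescaled ⟨r, hr⟩]
  have hchain : HasDerivAt (fun r : ℝ ↦ u (r • t, x) 1)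
      (fderiv 𝕜 (fun p ↦ u p 1) (t, x) (t, 0)) 1 := by
    have hline : HasDerivAt (fun r : ℝ ↦ (r • t, x)) (t, 0) 1 := by
      simpa using ((hasDerivAt_id (1 : ℝ)).smul_const t).prodMk (hasDerivAt_const 1 x)
    exact (hend.differentiableAt.hasFDerivAt.restrictScalars ℝ).comp_hasDerivAt_of_eq 1 hline
      (by simp)
  calc t • fderiv 𝕜 (fun p ↦ u p 1) (t, x) (1, 0)
      = fderiv 𝕜 (fun p ↦ u p 1) (t, x) (t, 0) := by rw [← map_smul]; simp
    _ = t • V (u (t, x) 1) :=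
      (uniqueDiffOn_Icc zero_lt_one 1 (right_mem_Icc.2 zero_le_one)).eq_deriv _
        hchain.hasDerivWithinAt hpath

theorem eventually_fderiv_endpoint (h : IsLocalSolutionFamily V x₀ u) (hV : AnalyticAt 𝕜 V x₀) :
    ∀ᶠ p in 𝓝 (0, x₀), fderiv 𝕜 (fun p ↦ u p 1) p (1, 0) = V (u p 1) := by
  filter_upwards [(h.eventually_smul_fderiv_endpoint hV).eventually_nhds,
    h.eventually_forall_analyticAt hV, h.analyticAt_endpoint.eventually_analyticAt]
    with ⟨t, x⟩ hsmul hVan hend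
  rcases eq_or_ne t 0 with rfl | ht
  · have hline : ContinuousAt (fun τ : 𝕜 ↦ (τ, x)) 0 := by fun_prop
    have hleft : ContinuousAt (fun τ ↦ fderiv 𝕜 (fun p ↦ u p 1) (τ, x) (1, 0)) 0 :=
      (hend.fderiv.continuousAt.comp_of_eq hline rfl).clm_apply continuousAt_const
    have hright : ContinuousAt (fun τ ↦ V (u (τ, x) 1)) 0 :=
      (hVan 1).continuousAt.comp_of_eq (hend.continuousAt.comp_of_eq hline rfl) rfl
    have hpunctured : ∀ᶠ τ in 𝓝[≠] 0,
        fderiv 𝕜 (fun p ↦ u p 1) (τ, x) (1, 0) = V (u (τ, x) 1) := by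
      filter_upwards [(hline.eventually hsmul).filter_mono nhdsWithin_le_nhds,
        self_mem_nhdsWithin] with τ hτ hτ₀ using smul_right_injective E hτ₀ hτ
    exact ((hleft.eventuallyEq_nhds_iff_eventuallyEq_nhdsNE hright).1 hpunctured).self_of_nhds
  · exact smul_right_injective E ht hsmul.self_of_nhds

end IsLocalSolutionFamily

theorem exists_analyticAt_flow [CompleteSpace E] (hV : AnalyticAt 𝕜 V x₀) :
    ∃ φ : 𝕜 × E → E, AnalyticAt 𝕜 φ (0, x₀) ∧ (∀ᶠ x in 𝓝 x₀, φ (0, x) = x) ∧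
      ∀ᶠ p in 𝓝 (0, x₀), fderiv 𝕜 φ p (1, 0) = V (φ p) := by
  obtain ⟨u, hu⟩ := exists_isLocalSolutionFamily hV
  exact ⟨fun p ↦ u p 1, hu.analyticAt_endpoint, hu.eventually_endpoint_zero,
    hu.eventually_fderiv_endpoint hV⟩

end Flow

section FirstIntegral

variable {𝕜 E : Type*} [RCLike 𝕜] [NormedAddCommGroup E] [NormedSpace 𝕜 E] [CompleteSpace E]
  {x₀ : E}

theorem exists_analyticAt_inverseFlow {φ : 𝕜 × E → E} (hφ : AnalyticAt 𝕜 φ (0, x₀))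
    (hφ₀ : ∀ᶠ x in 𝓝 x₀, φ (0, x) = x) :
    ∃ Φ : 𝕜 × E → E, AnalyticAt 𝕜 Φ (0, x₀) ∧ Φ (0, x₀) = x₀ ∧
      (∀ᶠ p in 𝓝 (0, x₀), φ (p.1, Φ p) = p.2) ∧ ∀ᶠ q in 𝓝 (0, x₀), Φ (q.1, φ q) = q.2 := by
  have hdefect : AnalyticAt 𝕜 (fun v : (𝕜 × E) × E ↦ φ (v.1.1, v.2) - v.1.2) ((0, x₀), x₀) :=
    (hφ.fun_comp_of_eq ((analyticAt_fst.fun_comp analyticAt_fst).prod analyticAt_snd) rfl).sub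
      (analyticAt_snd.fun_comp analyticAt_fst)
  obtain ⟨Φ, hΦ, hΦ₀, hzero, hunique⟩ := exists_analyticAt_implicitFunction_of_eq_sub hdefect
    (hφ₀.mono fun y hy ↦ by simp only [hy])
  refine ⟨Φ, hΦ, hΦ₀, hzero.mono fun p ↦ sub_eq_zero.1, ?_⟩
  have hgraph : ContinuousAt (fun q : 𝕜 × E ↦ ((q.1, φ q), q.2)) (0, x₀) :=
    (continuousAt_fst.prodMk hφ.continuousAt).prodMk continuousAt_snd
  have hunique' := hgraph.eventually
    (p := fun v ↦ φ (v.1.1, v.2) - v.1.2 = 0 → Φ v.1 = v.2) (by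
      simpa only [hφ₀.self_of_nhds] using hunique)
  exact hunique'.mono fun q hq ↦ hq (sub_self _)

theorem exists_analyticAt_firstIntegral [NormedSpace ℝ E] [IsScalarTower ℝ 𝕜 E] {V : E → E}
    (hV : AnalyticAt 𝕜 V x₀) :
    ∃ φ Φ : 𝕜 × E → E, AnalyticAt 𝕜 φ (0, x₀) ∧ AnalyticAt 𝕜 Φ (0, x₀) ∧ Φ (0, x₀) = x₀ ∧
      (∀ᶠ p in 𝓝 (0, x₀), φ (p.1, Φ p) = p.2) ∧
      ∀ᶠ p in 𝓝 (0, x₀), fderiv 𝕜 Φ p (1, V p.2) = 0 := by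
  obtain ⟨φ, hφ, hφ₀, hflow⟩ := exists_analyticAt_flow hV
  obtain ⟨Φ, hΦ, hΦ₀, hright, hleft⟩ := exists_analyticAt_inverseFlow hφ hφ₀
  refine ⟨φ, Φ, hφ, hΦ, hΦ₀, hright, ?_⟩
  have hgraph : ContinuousAt (fun q : 𝕜 × E ↦ (q.1, φ q)) (0, x₀) :=
    continuousAt_fst.prodMk hφ.continuousAt
  have hgraph₀ : ((0 : 𝕜), φ (0, x₀)) = (0, x₀) := by rw [hφ₀.self_of_nhds]
  have hcurve : ∀ᶠ q in 𝓝 (0, x₀), fderiv 𝕜 Φ (q.1, φ q) (1, V (φ q)) = 0 := by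
    filter_upwards [hflow, hleft.eventually_nhds, hφ.eventually_analyticAt,
      hgraph.eventually (p := AnalyticAt 𝕜 Φ) (by
        simpa only [hgraph₀] using hΦ.eventually_analyticAt)] with q hflow hleft hφq hΦq
    have hchain := hΦq.differentiableAt.hasFDerivAt.comp q
      (hasFDerivAt_fst.prodMk hφq.differentiableAt.hasFDerivAt)
    have hderiv := hchain.unique (hasFDerivAt_snd.congr_of_eventuallyEq hleft)
    simpa [hflow] using DFunLike.congr_fun hderiv (1, 0)
  have hpullback : ContinuousAt (fun p : 𝕜 × E ↦ (p.1, Φ p)) (0, x₀) :=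
    continuousAt_fst.prodMk hΦ.continuousAt
  filter_upwards [hright, hpullback.eventually
    (p := fun q ↦ fderiv 𝕜 Φ (q.1, φ q) (1, V (φ q)) = 0) (by
      simpa only [hΦ₀] using hcurve)] with p hp hcurve
  simpa only [hp] using hcurve

end FirstIntegral

section Wirtinger

variable {E F : Type*} [NormedAddCommGroup E] [NormedSpace ℂ E] [NormedAddCommGroup F]
  [NormedSpace ℂ F]

/-- The coefficient `a` in the decomposition `L = a dz + b dz̄` of a real-linear map `L : ℂ → E`;
for `L = fderiv ℝ g z` it is the Wirtinger derivative `g_z`. -/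
noncomputable def dzCoeff (L : ℂ →L[ℝ] E) : E :=
  (1 / 2 : ℂ) • (L 1 - I • L I)

theorem wirtingerZ_eq_dzCoeff (g : ℂ → ℂ) (z : ℂ) : wirtingerZ g z = dzCoeff (fderiv ℝ g z) :=
  rfl

theorem dzCoeff_restrictScalars_comp (T : E →L[ℂ] F) (L : ℂ →L[ℝ] E) :
    dzCoeff (T.restrictScalars ℝ ∘L L) = T (dzCoeff L) := by
  simp [dzCoeff]

theorem dzCoeff_id_prod (L : ℂ →L[ℝ] E) :
    dzCoeff ((ContinuousLinearMap.id ℝ ℂ).prod L) = (1, dzCoeff L) := by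
  ext <;> simp [dzCoeff]; norm_num

theorem dzCoeff_eq_zero_iff {L : ℂ →L[ℝ] E} : dzCoeff L = 0 ↔ -L I = I • L 1 := by
  have hmul : -L I - I • L 1 = -I • (L 1 - I • L I) := by
    simp only [smul_sub, smul_smul, neg_mul, I_mul_I, neg_neg, one_smul, neg_smul]
    abel
  rw [dzCoeff, ← sub_eq_zero (a := -L I), hmul]
  simp

theorem differentiableAt_comp_conj {g : ℂ → E} {z : ℂ} (hg : DifferentiableAt ℝ g (conj z))
    (hdz : dzCoeff (fderiv ℝ g (conj z)) = 0) : DifferentiableAt ℂ (fun w ↦ g (conj w)) z := by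
  have hderiv : HasFDerivAt (fun w ↦ g (conj w)) (fderiv ℝ g (conj z) ∘L conjCLE) z :=
    hg.hasFDerivAt.comp z conjCLE.hasFDerivAt
  refine differentiableAt_complex_iff_differentiableAt_real.2 ⟨hderiv.differentiableAt, ?_⟩
  rw [hderiv.fderiv]
  simpa using dzCoeff_eq_zero_iff.1 hdz

theorem analyticAt_of_eventually_dzCoeff_eq_zero [CompleteSpace E] {g : ℂ → E} {z₀ : ℂ}
    (hg : ∀ᶠ z in 𝓝 z₀, DifferentiableAt ℝ g z)
    (hdz : ∀ᶠ z in 𝓝 z₀, dzCoeff (fderiv ℝ g z) = 0) : AnalyticAt ℝ g z₀ := by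
  have hconj : Tendsto conj (𝓝 (conj z₀)) (𝓝 z₀) := by
    simpa using continuous_conj.tendsto (conj z₀)
  have hcomp : AnalyticAt ℂ (fun z ↦ g (conj z)) (conj z₀) := by
    rw [analyticAt_iff_eventually_differentiableAt]
    filter_upwards [hconj.eventually hg, hconj.eventually hdz] with z hgz hdz
    exact differentiableAt_comp_conj hgz hdz
  simpa [Function.comp_def] using
    hcomp.restrictScalars.comp ((conjCLE : ℂ →L[ℝ] ℂ).analyticAt z₀)

theorem analyticAt_of_eventually_dzCoeff_eq [CompleteSpace E] {V : E → E} {g : ℂ → E} {z₀ : ℂ}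
    (hV : AnalyticAt ℂ V (g z₀)) (hg : ∀ᶠ z in 𝓝 z₀, DifferentiableAt ℝ g z)
    (hdz : ∀ᶠ z in 𝓝 z₀, dzCoeff (fderiv ℝ g z) = V (g z)) : AnalyticAt ℝ g z₀ := by
  obtain ⟨φ, Φ, hφ, hΦ, hΦ₀, hright, hintegral⟩ := exists_analyticAt_firstIntegral hV
  have hgraph : ContinuousAt (fun z ↦ (z - z₀, g z)) z₀ :=
    (continuousAt_id.sub continuousAt_const).prodMk hg.self_of_nhds.continuousAt
  have hgraph₀ : (z₀ - z₀, g z₀) = (0, g z₀) := by rw [sub_self]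
  have pullback {P : ℂ × E → Prop} (hP : ∀ᶠ p in 𝓝 (0, g z₀), P p) :
      ∀ᶠ z in 𝓝 z₀, P (z - z₀, g z) :=
    hgraph.eventually (by simpa only [hgraph₀] using hP)
  have hG : ∀ᶠ z in 𝓝 z₀, HasFDerivAt (fun z ↦ Φ (z - z₀, g z))
      ((fderiv ℂ Φ (z - z₀, g z)).restrictScalars ℝ ∘L
        (ContinuousLinearMap.id ℝ ℂ).prod (fderiv ℝ g z)) z := by
    filter_upwards [hg, pullback hΦ.eventually_analyticAt] with z hgz hΦz
    exact (hΦz.differentiableAt.hasFDerivAt.restrictScalars ℝ).comp z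
      (((hasFDerivAt_id z).sub_const z₀).prodMk hgz.hasFDerivAt)
  have hG_analytic : AnalyticAt ℝ (fun z ↦ Φ (z - z₀, g z)) z₀ := by
    refine analyticAt_of_eventually_dzCoeff_eq_zero (hG.mono fun z hz ↦ hz.differentiableAt) ?_
    filter_upwards [hG, hdz, pullback hintegral] with z hGz hdz hintegral
    rw [hGz.fderiv, dzCoeff_restrictScalars_comp, dzCoeff_id_prod, hdz, hintegral]
  have hflow : AnalyticAt ℝ (fun z ↦ φ (z - z₀, Φ (z - z₀, g z))) z₀ :=
    hφ.restrictScalars.fun_comp_of_eq ((analyticAt_id.sub analyticAt_const).prod hG_analytic)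
      (by simp [hΦ₀])
  exact hflow.congr (pullback hright)

end Wirtinger

theorem analyticAt_cubic {U : Set ℂ} (hU : IsOpen U) {A B C D : ℂ → ℂ}
    (hA : DifferentiableOn ℂ A U) (hB : DifferentiableOn ℂ B U) (hC : DifferentiableOn ℂ C U)
    (hD : DifferentiableOn ℂ D U) {p : ℂ × ℂ} (hp : p.1 ∈ U) :
    AnalyticAt ℂ (fun p ↦ A p.1 * p.2 ^ 3 + B p.1 * p.2 ^ 2 + C p.1 * p.2 + D p.1) p := by
  have analyticAt_coeff {G : ℂ → ℂ} (hG : DifferentiableOn ℂ G U) :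
      AnalyticAt ℂ (fun p ↦ G p.1) p :=
    (hG.analyticAt (hU.mem_nhds hp)).fun_comp analyticAt_fst
  exact ((((analyticAt_coeff hA).mul (analyticAt_snd.pow 3)).add
    ((analyticAt_coeff hB).mul (analyticAt_snd.pow 2))).add
    ((analyticAt_coeff hC).mul analyticAt_snd)).add (analyticAt_coeff hD)

theorem smooth_solution_is_real_analytic_general {E : Type*} [NormedAddCommGroup E]
    [NormedSpace ℂ E] [CompleteSpace E] {U : Set ℂ} (hU : IsOpen U) {P : ℂ × E → E} {f : ℂ → E}
    (hP : ∀ z ∈ U, AnalyticAt ℂ P (z, f z)) (hf : DifferentiableOn ℝ f U)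
    (heq : ∀ z ∈ U, dzCoeff (fderiv ℝ f z) = P (z, f z)) : AnalyticOnNhd ℝ f U := by
  intro z₀ hz₀
  have hU_nhds : ∀ᶠ z in 𝓝 z₀, z ∈ U := hU.mem_nhds hz₀
  have hgraph : ∀ z ∈ U, HasFDerivAt (fun z ↦ (z, f z))
      ((ContinuousLinearMap.id ℝ ℂ).prod (fderiv ℝ f z)) z := fun z hz ↦
    (hasFDerivAt_id z).prodMk (hf.differentiableAt (hU.mem_nhds hz)).hasFDerivAt
  have hgraph_analytic : AnalyticAt ℝ (fun z ↦ (z, f z)) z₀ := by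
    refine analyticAt_of_eventually_dzCoeff_eq (V := fun p ↦ (1, P p))
      (analyticAt_const.prod (hP z₀ hz₀))
      (hU_nhds.mono fun z hz ↦ (hgraph z hz).differentiableAt) (hU_nhds.mono fun z hz ↦ ?_)
    rw [(hgraph z hz).fderiv, dzCoeff_id_prod, heq z hz]
  exact analyticAt_snd.fun_comp hgraph_analytic

/-- Every `C^∞`-smooth solution `f` of `f_z = A f³ + B f² + C f + D`, with `A, B, C, D`
holomorphic on an open set `U ⊆ ℂ`, is real-analytic on `U`. -/
theorem smooth_solution_is_real_analytic
    (U : Set ℂ) (hU : IsOpen U)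
    (A B C D : ℂ → ℂ)
    (hA : DifferentiableOn ℂ A U) (hB : DifferentiableOn ℂ B U)
    (hC : DifferentiableOn ℂ C U) (hD : DifferentiableOn ℂ D U)
    (f : ℂ → ℂ) (hf : ContDiffOn ℝ (⊤ : ℕ∞) f U)
    (heq : ∀ z ∈ U, wirtingerZ f z = A z * (f z) ^ 3 + B z * (f z) ^ 2 + C z * f z + D z) :
    AnalyticOnNhd ℝ f U :=
  smooth_solution_is_real_analytic_general hU
    (fun _ hz ↦ analyticAt_cubic hU hA hB hC hD hz) (hf.differentiableOn (by simp))
    fun z hz ↦ (wirtingerZ_eq_dzCoeff f z).symm.trans (heq z hz)
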